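/- For every pair of integers n, m ≥ 2, the grid G = P_n □ P_m satisfies 1 ∈ S_SC(G); that is, there exists a strongly connected orientation D of G with con(D) = 1. -/

import Mathlib

/-!  Common definitions: oriented graphs, geodesic convexity, convexity number,
strong convexity spectrum, and grid graphs. -/

variable {V : Type*}

/-- A directed walk of length `k` from `u` to `v` along the arc relation `A`,
encoded by the function `f` listing its vertices. -/
def IsDirWalk (A : V → V → Prop) (k : ℕ) (f : ℕ → V) (u v : V) : Prop :=
  f 0 = u ∧ f k = v ∧ ∀ i, i < k → A (f i) (f (i + 1))

/-- There is a directed walk from `u` to `v`. -/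
def DirReachable (A : V → V → Prop) (u v : V) : Prop :=
  ∃ k f, IsDirWalk A k f u v

/-- A digraph (given by its arc relation) is strongly connected. -/
def StrongConnected (A : V → V → Prop) : Prop :=
  ∀ u v : V, DirReachable A u v

/-- A `uv`-geodesic: a directed walk from `u` to `v` of minimum possible length
(such a walk is automatically a directed path). -/
def IsGeodesic (A : V → V → Prop) (k : ℕ) (f : ℕ → V) (u v : V) : Prop :=
  IsDirWalk A k f u v ∧ ∀ k' f', IsDirWalk A k' f' u v → k ≤ k'

/-- A nonempty vertex set `C` is convex if every vertex lying on a geodesic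
between two vertices of `C` (in either direction) belongs to `C`. -/
def DConvex (A : V → V → Prop) (C : Set V) : Prop :=
  C.Nonempty ∧ ∀ u ∈ C, ∀ v ∈ C, ∀ k f, IsGeodesic A k f u v → ∀ i ≤ k, f i ∈ C

/-- `A` is an orientation of the simple graph `G`: every arc is along an edge,
every edge gets an arc, and no edge gets both directions. -/
def IsOrientation (G : SimpleGraph V) (A : V → V → Prop) : Prop :=
  (∀ x y, A x y → G.Adj x y) ∧ (∀ x y, G.Adj x y → A x y ∨ A y x) ∧
    (∀ x y, A x y → ¬ A y x)

/-- The convexity number of a digraph: the maximum cardinality of a proper convex set. -/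
noncomputable def convexityNumber [Fintype V] (A : V → V → Prop) : ℕ :=
  sSup {k | ∃ C : Set V, DConvex A C ∧ C ≠ Set.univ ∧ C.ncard = k}

/-- The strong convexity spectrum of a graph: the set of convexity numbers of
its strongly connected orientations. -/
def strongConvexitySpectrum [Fintype V] (G : SimpleGraph V) : Set ℕ :=
  {k | ∃ A : V → V → Prop, IsOrientation G A ∧ StrongConnected A ∧ convexityNumber A = k}

/-- The grid graph `P_n □ P_m`. -/
def gridGraph (n m : ℕ) : SimpleGraph (Fin n × Fin m) :=
  (SimpleGraph.pathGraph n).boxProd (SimpleGraph.pathGraph m)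

/-!
Alternate the arcs of a Cartesian product of two bipartite graphs: along the first factor out of the
vertices of one colour, along the second factor out of the others. Every product of an edge of the
first factor with an edge of the second then becomes a directed 4-cycle. As there are no triangles,
the three arcs leading back from the head of an arc of such a 4-cycle to its tail form a geodesic,
so a convex set that contains an arc contains every 4-cycle through it. A convex set with two
vertices contains an arc, and spreads from it over the whole connected product. The 4-cycles also
make the orientation strong, since each of them gives a way back along its arcs.
-/

open SimpleGraph Relation

section Digraph

variable {A : V → V → Prop} {C : Set V} {u v w x y z : V} {k : ℕ} {f : ℕ → V}

theorem IsDirWalk.nil (A : V → V → Prop) (u : V) : IsDirWalk A 0 (fun _ => u) u u :=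
  ⟨rfl, rfl, fun _ hi => absurd hi (Nat.not_lt_zero _)⟩

theorem IsDirWalk.cons (huv : A u v) (hf : IsDirWalk A k f v w) :
    IsDirWalk A (k + 1) (fun i => Nat.casesOn i u f) u w := by
  obtain ⟨rfl, hf_end, hf_arc⟩ := hf
  refine ⟨rfl, hf_end, fun i hi => ?_⟩
  cases i with
  | zero => exact huv
  | succ i => exact hf_arc i (Nat.lt_of_succ_lt_succ hi)

theorem DirReachable.of_reflTransGen (h : ReflTransGen A u v) : DirReachable A u v := by
  induction h using ReflTransGen.head_induction_on with
  | refl => exact ⟨0, _, IsDirWalk.nil A v⟩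
  | head huw _ ih =>
    obtain ⟨k, f, hf⟩ := ih
    exact ⟨k + 1, _, hf.cons huw⟩

theorem DirReachable.exists_isGeodesic (h : DirReachable A u v) :
    ∃ k f, IsGeodesic A k f u v := by
  classical
  obtain ⟨f, hf⟩ := Nat.find_spec h
  exact ⟨Nat.find h, f, hf, fun _ g hg => Nat.find_min' h ⟨g, hg⟩⟩

theorem DConvex.singleton (A : V → V → Prop) (u : V) : DConvex A {u} := by
  refine ⟨Set.singleton_nonempty u, ?_⟩
  rintro _ rfl _ rfl k f ⟨⟨hf_start, -, -⟩, hmin⟩ i hi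
  have hk : k = 0 := Nat.le_zero.mp (hmin 0 _ (IsDirWalk.nil A _))
  obtain rfl : i = 0 := Nat.le_zero.mp (hk ▸ hi)
  exact hf_start

theorem DConvex.exists_arc_of_nontrivial (hC : DConvex A C) (hA : StrongConnected A)
    (hnt : C.Nontrivial) : ∃ x ∈ C, ∃ y ∈ C, A x y := by
  obtain ⟨x, hx, y, hy, hxy⟩ := hnt
  obtain ⟨k, f, hf⟩ := (hA x y).exists_isGeodesic
  obtain ⟨hf_start, hf_end, hf_arc⟩ := hf.1
  have hk : 0 < k := by
    refine Nat.pos_of_ne_zero fun hk => hxy ?_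
    rw [← hf_start, ← hf_end, hk]
  exact ⟨x, hx, f 1, hC.2 x hx y hy k f hf 1 hk, hf_start ▸ hf_arc 0 hk⟩

theorem convexityNumber_eq_one [Fintype V] [Nontrivial V]
    (h : ∀ C : Set V, DConvex A C → C.Nontrivial → C = Set.univ) : convexityNumber A = 1 := by
  suffices {k | ∃ C : Set V, DConvex A C ∧ C ≠ Set.univ ∧ C.ncard = k} = {1} by
    rw [convexityNumber, this, csSup_singleton]
  refine Set.eq_singleton_iff_unique_mem.mpr ⟨?_, ?_⟩
  · obtain ⟨u⟩ := (inferInstance : Nonempty V)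
    exact ⟨{u}, DConvex.singleton A u, Set.singleton_ne_univ u, Set.ncard_singleton u⟩
  · rintro _ ⟨C, hC, hproper, rfl⟩
    have hsub : C.Subsingleton := Set.not_nontrivial_iff.mp (mt (h C hC) hproper)
    exact Set.ncard_eq_one.mpr (Set.exists_eq_singleton_iff_nonempty_subsingleton.mpr ⟨hC.1, hsub⟩)

/-- The vertices `x → y → z → w → x` form a directed 4-cycle, the shape through which convex
sets spread. Distinctness is not part of the definition: it is automatic in an orientation. -/
def IsDirectedSquare (A : V → V → Prop) (x y z w : V) : Prop :=
  A x y ∧ A y z ∧ A z w ∧ A w x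

theorem IsDirectedSquare.rotate (h : IsDirectedSquare A x y z w) : IsDirectedSquare A y z w x :=
  ⟨h.2.1, h.2.2.1, h.2.2.2, h.1⟩

theorem IsDirectedSquare.reflTransGen (h : IsDirectedSquare A x y z w) : ReflTransGen A y x :=
  .head h.2.1 (.head h.2.2.1 (.single h.2.2.2))

end Digraph

section Orientation

variable {G : SimpleGraph V} {A : V → V → Prop} {C : Set V} {x y z w : V}

theorem IsOrientation.strongConnected (hA : IsOrientation G A) (hG : G.Preconnected)
    (hback : ∀ x y, A x y → ReflTransGen A y x) : StrongConnected A := by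
  intro u v
  have hadj : ∀ x y, G.Adj x y → ReflTransGen A x y := fun x y hxy =>
    (hA.2.1 x y hxy).elim ReflTransGen.single (hback y x)
  exact .of_reflTransGen
    (reflTransGen_closed hadj u v ((G.reachable_iff_reflTransGen u v).mp (hG u v)))

theorem IsOrientation.three_le_of_isDirWalk (hA : IsOrientation G A) (hG : G.CliqueFree 3)
    (hxy : A x y) {k : ℕ} {f : ℕ → V} (hf : IsDirWalk A k f y x) : 3 ≤ k := by
  obtain ⟨rfl, rfl, hf_arc⟩ := hf
  by_contra! hk
  interval_cases k
  · exact (hA.1 _ _ hxy).ne rfl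
  · exact hA.2.2 _ _ hxy (hf_arc 0 one_pos)
  · have h01 := hA.1 _ _ (hf_arc 0 two_pos)
    have h12 := hA.1 _ _ (hf_arc 1 one_lt_two)
    classical
    exact hG _ (is3Clique_triple_iff.mpr ⟨h01, (hA.1 _ _ hxy).symm, h12⟩)

theorem IsDirectedSquare.mem_of_mem (h : IsDirectedSquare A x y z w) (hA : IsOrientation G A)
    (hG : G.CliqueFree 3) (hC : DConvex A C) (hx : x ∈ C) (hy : y ∈ C) : z ∈ C ∧ w ∈ C := by
  obtain ⟨hxy, hyz, hzw, hwx⟩ := h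
  have hwalk := (((IsDirWalk.nil A x).cons hwx).cons hzw).cons hyz
  have hmem := hC.2 y hy x hx 3 _
    ⟨hwalk, fun _ _ hf => hA.three_le_of_isDirWalk hG hxy hf⟩
  exact ⟨hmem 1 (by decide), hmem 2 (by decide)⟩

theorem IsDirectedSquare.mem_iff_mem (h : IsDirectedSquare A x y z w) (hA : IsOrientation G A)
    (hG : G.CliqueFree 3) (hC : DConvex A C) (hx : x ∈ C) : y ∈ C ↔ w ∈ C :=
  ⟨fun hy => (h.mem_of_mem hA hG hC hx hy).2,
    fun hw => (h.rotate.rotate.rotate.mem_of_mem hA hG hC hw hx).1⟩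

theorem coloring_eq_not_of_adj (c : G.Coloring Bool) (h : G.Adj x y) : c y = !c x :=
  Bool.eq_not.mpr (c.valid h.symm)

theorem eq_univ_of_adj_of_forall_adj_mem (hG : G.Preconnected) (hx : x ∈ C) (hy : y ∈ C)
    (hxy : G.Adj x y)
    (hC : ∀ u v w, u ∈ C → v ∈ C → G.Adj v u → G.Adj v w → w ∈ C) : C = Set.univ := by
  refine Set.eq_univ_of_forall fun t => ?_
  obtain ⟨p⟩ := hG x t
  induction p generalizing y with
  | nil => exact hx
  | cons hadj _ ih => exact ih (hC _ _ _ hy hx hxy hadj) hx hadj.symm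

end Orientation

section BoxProd

variable {W : Type*} {G : SimpleGraph V} {H : SimpleGraph W}

theorem colorable_boxProd {n : ℕ} (hG : G.Colorable n) (hH : H.Colorable n) :
    (G □ H).Colorable n := by
  obtain ⟨c⟩ := hG
  obtain ⟨d⟩ := hH
  refine ⟨Coloring.mk (fun x => c x.1 + d x.2) fun {x y} hxy heq => ?_⟩
  have : NeZero n := ⟨(c x.1).pos.ne'⟩
  rcases boxProd_adj.mp hxy with ⟨hadj, hxy'⟩ | ⟨hadj, hxy'⟩
  · rw [hxy'] at heq
    exact c.valid hadj (add_right_cancel heq)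
  · rw [hxy'] at heq
    exact d.valid hadj (add_left_cancel heq)

/-- The orientation of `G □ H` whose arcs leave the vertices of colour `true` along `G` and the
vertices of colour `false` along `H`. For the checkerboard colouring of a grid, every unit square
becomes a directed 4-cycle. -/
def alternatingOrientation (c : (G □ H).Coloring Bool) (x y : V × W) : Prop :=
  c x = true ∧ G.Adj x.1 y.1 ∧ x.2 = y.2 ∨ c x = false ∧ H.Adj x.2 y.2 ∧ x.1 = y.1

namespace alternatingOrientation

variable (c : (G □ H).Coloring Bool) {a a' : V} {b b' : W} {C : Set (V × W)}

theorem isOrientation : IsOrientation (G □ H) (alternatingOrientation c) := by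
  refine ⟨fun x y hxy => hxy.imp And.right And.right, fun x y hxy => ?_, fun x y hxy hyx => ?_⟩
  · have hxy_color : c y = !c x := coloring_eq_not_of_adj c hxy
    rcases boxProd_adj.mp hxy with ⟨hadj, heq⟩ | ⟨hadj, heq⟩ <;> cases hx : c x
    · exact .inr (.inl ⟨by simp [hxy_color, hx], hadj.symm, heq.symm⟩)
    · exact .inl (.inl ⟨hx, hadj, heq⟩)
    · exact .inl (.inr ⟨hx, hadj, heq⟩)
    · exact .inr (.inr ⟨by simp [hxy_color, hx], hadj.symm, heq.symm⟩)
  · have hne : c x ≠ c y := c.valid (hxy.imp And.right And.right)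
    rcases hxy with ⟨hx, hadj, -⟩ | ⟨hx, hadj, -⟩ <;> rcases hyx with ⟨hy, -, heq⟩ | ⟨hy, -, heq⟩
    · exact hne (hx.trans hy.symm)
    · exact hadj.ne heq.symm
    · exact hadj.ne heq.symm
    · exact hne (hx.trans hy.symm)

theorem isDirectedSquare_of_eq_true (ha : G.Adj a a') (hb : H.Adj b b') (hc : c (a, b) = true) :
    IsDirectedSquare (alternatingOrientation c) (a, b) (a', b) (a', b') (a, b') := by
  have hac : ∀ t, c (a', t) = !c (a, t) := fun t =>
    coloring_eq_not_of_adj c (boxProd_adj_left.mpr ha)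
  have hbc : ∀ s, c (s, b') = !c (s, b) := fun s =>
    coloring_eq_not_of_adj c (boxProd_adj_right.mpr hb)
  exact ⟨.inl ⟨hc, ha, rfl⟩, .inr ⟨by simp [hac, hc], hb, rfl⟩,
    .inl ⟨by simp [hac, hbc, hc], ha.symm, rfl⟩, .inr ⟨by simp [hbc, hc], hb.symm, rfl⟩⟩

theorem isDirectedSquare_of_eq_false (ha : G.Adj a a') (hb : H.Adj b b') (hc : c (a, b) = false) :
    IsDirectedSquare (alternatingOrientation c) (a, b) (a, b') (a', b') (a', b) := by
  have hc' : c (a', b) = true := by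
    simp [coloring_eq_not_of_adj c (boxProd_adj_left.mpr ha), hc]
  exact (isDirectedSquare_of_eq_true c ha.symm hb hc').rotate

theorem strongConnected [Nontrivial V] [Nontrivial W] (hG : G.Preconnected)
    (hH : H.Preconnected) : StrongConnected (alternatingOrientation c) := by
  refine (isOrientation c).strongConnected (hG.boxProd hH) ?_
  rintro ⟨a, b⟩ ⟨a', b'⟩ (⟨hc, hadj, rfl⟩ | ⟨hc, hadj, rfl⟩)
  · obtain ⟨t, ht⟩ := hH.exists_adj_of_nontrivial b
    exact (isDirectedSquare_of_eq_true c hadj ht hc).reflTransGen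
  · obtain ⟨s, hs⟩ := hG.exists_adj_of_nontrivial a
    exact (isDirectedSquare_of_eq_false c hs hadj hc).reflTransGen

theorem mem_iff_mem_of_adj (hC : DConvex (alternatingOrientation c) C) (hab : (a, b) ∈ C)
    (ha : G.Adj a a') (hb : H.Adj b b') : (a', b) ∈ C ↔ (a, b') ∈ C := by
  have hfree : (G □ H).CliqueFree 3 := c.colorable.cliqueFree (by simp)
  cases hc : c (a, b) with
  | true =>
    exact (isDirectedSquare_of_eq_true c ha hb hc).mem_iff_mem (isOrientation c) hfree hC hab
  | false =>
    exact ((isDirectedSquare_of_eq_false c ha hb hc).mem_iff_mem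
      (isOrientation c) hfree hC hab).symm

theorem mem_of_adj_of_adj [Nontrivial V] [Nontrivial W] (hG : G.Preconnected)
    (hH : H.Preconnected) (hC : DConvex (alternatingOrientation c) C) {u v w : V × W} (hu : u ∈ C)
    (hv : v ∈ C) (hvu : (G □ H).Adj v u) (hvw : (G □ H).Adj v w) : w ∈ C := by
  obtain ⟨a, b⟩ := v
  have hswap {s t} : G.Adj a s → H.Adj b t → ((s, b) ∈ C ↔ (a, t) ∈ C) :=
    mem_iff_mem_of_adj c hC hv
  obtain ⟨u₁, u₂⟩ := u
  obtain ⟨w₁, w₂⟩ := w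
  rcases hvu with ⟨hu', rfl⟩ | ⟨hu', rfl⟩ <;> rcases hvw with ⟨hw', rfl⟩ | ⟨hw', rfl⟩
  · obtain ⟨t, ht⟩ := hH.exists_adj_of_nontrivial b
    exact (hswap hw' ht).mpr ((hswap hu' ht).mp hu)
  · exact (hswap hu' hw').mp hu
  · exact (hswap hw' hu').mpr hu
  · obtain ⟨s, hs⟩ := hG.exists_adj_of_nontrivial a
    exact (hswap hs hw').mp ((hswap hs hu').mpr hu)

theorem eq_univ_of_dConvex [Nontrivial V] [Nontrivial W] (hG : G.Preconnected)
    (hH : H.Preconnected) (hC : DConvex (alternatingOrientation c) C) (hnt : C.Nontrivial) :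
    C = Set.univ := by
  obtain ⟨x, hx, y, hy, hxy⟩ := hC.exists_arc_of_nontrivial (strongConnected c hG hH) hnt
  exact eq_univ_of_adj_of_forall_adj_mem (hG.boxProd hH) hx hy ((isOrientation c).1 x y hxy)
    fun _ _ _ hu hv hvu hvw => mem_of_adj_of_adj c hG hH hC hu hv hvu hvw

end alternatingOrientation

theorem one_mem_strongConvexitySpectrum_grid_general [Fintype V] [Fintype W] [Nontrivial V]
    [Nontrivial W] (hG : G.Preconnected) (hH : H.Preconnected) (hG₂ : G.IsBipartite)
    (hH₂ : H.IsBipartite) : 1 ∈ strongConvexitySpectrum (G □ H) := by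
  let c : (G □ H).Coloring Bool := (colorable_boxProd hG₂ hH₂).toColoring (by simp)
  exact ⟨alternatingOrientation c, alternatingOrientation.isOrientation c,
    alternatingOrientation.strongConnected c hG hH,
    convexityNumber_eq_one fun _ => alternatingOrientation.eq_univ_of_dConvex c hG hH⟩

end BoxProd

/-- Every grid has a strongly connected orientation with convexity number `1`. -/
theorem one_mem_strongConvexitySpectrum_grid (n m : ℕ) (hn : 2 ≤ n) (hm : 2 ≤ m) :
    1 ∈ strongConvexitySpectrum (gridGraph n m) := by
  have := Fin.nontrivial_iff_two_le.mpr hn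
  have := Fin.nontrivial_iff_two_le.mpr hm
  exact one_mem_strongConvexitySpectrum_grid_general (pathGraph_preconnected n)
    (pathGraph_preconnected m) (pathGraph.bicoloring n).colorable (pathGraph.bicoloring m).colorable
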